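/- In the Diaconis–Fulton representation, if α is a τ-acceptable toppling sequence that stabilizes a configuration η in a finite set U, and β ⊆ U is any τ-legal toppling sequence for η, then m_β ≤ m_α pointwise. -/

import Mathlib

/-- The state of a site: `act m` means `m` active particles, `sleep` means one
sleeping particle. -/
inductive SiteState : Type
  | act : ℕ → SiteState
  | sleep : SiteState
deriving DecidableEq

/-- The rank of a site state for the total order `0 < 𝔰 < 1 < 2 < ⋯`. -/
def SiteState.rank : SiteState → ℕ
  | .act 0 => 0
  | .sleep => 1
  | .act (n + 1) => n + 2

/-- A toppling instruction: either a sleep instruction or a jump instruction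
towards a vertex. -/
inductive Instr (V : Type*) : Type _
  | sleep : Instr V
  | jump : V → Instr V

variable {V : Type*} [DecidableEq V]

/-- Removing one particle from a site (with the convention `𝔰 − 1 = 0`). -/
def SiteState.dec : SiteState → SiteState
  | .act (n + 1) => .act n
  | .act 0 => .act 0
  | .sleep => .act 0

/-- Adding one (active) particle to a site: a sleeping particle is woken up. -/
def SiteState.inc : SiteState → SiteState
  | .act n => .act (n + 1)
  | .sleep => .act 2

/-- The effect of an instruction performed at site `x` on the configuration `η`:
a sleep instruction puts a lone active particle at `x` to sleep, a jump
instruction moves one particle from `x` to its target. -/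
def applyInstr (ins : Instr V) (x : V) (η : V → SiteState) : V → SiteState :=
  match ins with
  | .sleep => if η x = .act 1 then Function.update η x .sleep else η
  | .jump y =>
      let η' := Function.update η x (SiteState.dec (η x))
      Function.update η' y (SiteState.inc (η' y))

/-- Toppling the site `x`: apply the next unused instruction of the stack at `x`
and increment the odometer there. -/
def topple (τ : V → ℕ → Instr V) (x : V) (s : (V → SiteState) × (V → ℕ)) :
    (V → SiteState) × (V → ℕ) :=
  (applyInstr (τ x (s.2 x)) x s.1, Function.update s.2 x (s.2 x + 1))

/-- Running a sequence of topplings. -/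
def runSeq (τ : V → ℕ → Instr V) : List V → ((V → SiteState) × (V → ℕ)) →
    (V → SiteState) × (V → ℕ)
  | [], s => s
  | x :: α, s => runSeq τ α (topple τ x s)

/-- A toppling sequence is legal if each toppling happens at a currently
unstable site (a site holding at least one active particle). -/
def LegalSeq (τ : V → ℕ → Instr V) : List V → ((V → SiteState) × (V → ℕ)) → Prop
  | [], _ => True
  | x :: α, s => 2 ≤ (s.1 x).rank ∧ LegalSeq τ α (topple τ x s)

/-- A toppling sequence is acceptable if each toppling happens at a currently
occupied site (holding at least a sleeping particle). -/
def AcceptableSeq (τ : V → ℕ → Instr V) : List V → ((V → SiteState) × (V → ℕ)) → Prop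
  | [], _ => True
  | x :: α, s => 1 ≤ (s.1 x).rank ∧ AcceptableSeq τ α (topple τ x s)

/-- A configuration is stable in `U` if every site of `U` holds either no particle
or one sleeping particle. -/
def StableIn (U : Set V) (η : V → SiteState) : Prop :=
  ∀ x ∈ U, (η x).rank ≤ 1

/-!
Topplings at two distinct occupied sites commute: the action of an instruction on its own site
commutes with the arrival of a particle as soon as that site is occupied. Hence, in an acceptable
sequence, the first toppling at an occupied site `x` can be moved to the front. Topplings elsewhere
never lower the state of `x`, so a site of `U` which is unstable at the start must be toppled by
every sequence that stabilizes `U`. The first toppling of `β` can thus be brought to the front of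
`α` and removed from both sequences, and one concludes by induction on `β`.
-/

namespace SiteState

theorem rank_le_rank_inc (a : SiteState) : a.rank ≤ a.inc.rank := by
  rcases a with (_ | n) | _ <;> simp [rank, inc]

theorem inc_dec_comm {a : SiteState} (ha : 1 ≤ a.rank) : a.inc.dec = a.dec.inc := by
  rcases a with (_ | n) | _ <;> simp [rank, inc, dec] at *

theorem inc_ne_act_one {a : SiteState} (ha : 1 ≤ a.rank) : a.inc ≠ .act 1 := by
  rcases a with (_ | n) | _ <;> simp [rank, inc] at *

end SiteState

/-- The configuration obtained from `η` by applying `f` to the state of the site `x`. -/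
def modifyAt {S : Type*} (x : V) (f : S → S) (η : V → S) : V → S :=
  Function.update η x (f (η x))

section modifyAt

variable {S : Type*} {x y : V} {f g : S → S}

@[simp]
theorem modifyAt_self (x : V) (f : S → S) (η : V → S) : modifyAt x f η x = f (η x) :=
  Function.update_self ..

@[simp]
theorem modifyAt_of_ne (h : x ≠ y) (f : S → S) (η : V → S) : modifyAt y f η x = η x :=
  Function.update_of_ne h ..

theorem modifyAt_comm {η : V → S} (h : x = y → f (g (η x)) = g (f (η x))) :
    modifyAt x f (modifyAt y g η) = modifyAt y g (modifyAt x f η) := by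
  obtain rfl | hxy := eq_or_ne x y
  · simp [modifyAt, h rfl]
  · simp [modifyAt, hxy, hxy.symm, Function.update_comm hxy]

end modifyAt

namespace Instr

/-- The effect of an instruction on the state of the site where it is performed, leaving out the
particle that a jump delivers (possibly to that same site). -/
def onSource {V : Type*} : Instr V → SiteState → SiteState
  | .sleep, a => if a = .act 1 then .sleep else a
  | .jump _, a => a.dec

/-- The arrival part of an instruction: a jump adds a particle at its target. -/
def deliver : Instr V → (V → SiteState) → (V → SiteState)
  | .sleep, η => η
  | .jump y, η => modifyAt y SiteState.inc η

theorem onSource_inc {V : Type*} (i : Instr V) {a : SiteState} (ha : 1 ≤ a.rank) :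
    i.onSource a.inc = (i.onSource a).inc := by
  cases i with
  | sleep =>
    -- A sleep instruction changes only `act 1`, and `act 1`, `sleep` have the same successor.
    obtain rfl | h := eq_or_ne a (.act 1)
    · rfl
    · simp [onSource, h, SiteState.inc_ne_act_one ha]
  | jump _ => exact SiteState.inc_dec_comm ha

theorem rank_le_rank_deliver (i : Instr V) (η : V → SiteState) (x : V) :
    (η x).rank ≤ (i.deliver η x).rank := by
  cases i with
  | sleep => rfl
  | jump y =>
    obtain rfl | hxy := eq_or_ne x y
    · simpa [deliver] using (η x).rank_le_rank_inc
    · simp [deliver, hxy]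

theorem deliver_comm (i j : Instr V) (η : V → SiteState) :
    i.deliver (j.deliver η) = j.deliver (i.deliver η) := by
  cases i <;> cases j <;> first | rfl | exact modifyAt_comm fun _ => rfl

theorem modifyAt_onSource_deliver (i j : Instr V) {x : V} {η : V → SiteState}
    (hx : 1 ≤ (η x).rank) :
    modifyAt x i.onSource (j.deliver η) = j.deliver (modifyAt x i.onSource η) := by
  cases j with
  | sleep => rfl
  | jump y => exact modifyAt_comm fun _ => i.onSource_inc hx

end Instr

theorem applyInstr_eq_deliver (i : Instr V) (x : V) (η : V → SiteState) :
    applyInstr i x η = i.deliver (modifyAt x i.onSource η) := by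
  cases i with
  | sleep =>
    by_cases h : η x = .act 1 <;> simp [applyInstr, Instr.deliver, Instr.onSource, modifyAt, h]
  | jump y => rfl

theorem applyInstr_comm (i j : Instr V) {x y : V} (hxy : x ≠ y) {η : V → SiteState}
    (hx : 1 ≤ (η x).rank) (hy : 1 ≤ (η y).rank) :
    applyInstr i x (applyInstr j y η) = applyInstr j y (applyInstr i x η) := by
  simp only [applyInstr_eq_deliver]
  calc i.deliver (modifyAt x i.onSource (j.deliver (modifyAt y j.onSource η)))
      = i.deliver (j.deliver (modifyAt x i.onSource (modifyAt y j.onSource η))) := by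
        rw [i.modifyAt_onSource_deliver j (by rwa [modifyAt_of_ne hxy])]
    _ = j.deliver (i.deliver (modifyAt y j.onSource (modifyAt x i.onSource η))) := by
        rw [i.deliver_comm, modifyAt_comm fun h => absurd h hxy]
    _ = j.deliver (modifyAt y j.onSource (i.deliver (modifyAt x i.onSource η))) := by
        rw [j.modifyAt_onSource_deliver i (by rwa [modifyAt_of_ne hxy.symm])]

section Toppling

variable {τ : V → ℕ → Instr V} {s : (V → SiteState) × (V → ℕ)} {x y : V} {α : List V}

theorem topple_comm (hxy : x ≠ y) (hx : 1 ≤ (s.1 x).rank) (hy : 1 ≤ (s.1 y).rank) :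
    topple τ x (topple τ y s) = topple τ y (topple τ x s) := by
  simp only [topple, Function.update_of_ne hxy, Function.update_of_ne hxy.symm]
  rw [applyInstr_comm _ _ hxy hx hy, Function.update_comm hxy]

theorem rank_le_rank_topple (hxy : x ≠ y) : (s.1 x).rank ≤ ((topple τ y s).1 x).rank := by
  rw [topple, applyInstr_eq_deliver]
  simpa only [modifyAt_of_ne hxy] using
    Instr.rank_le_rank_deliver (τ y (s.2 y)) (modifyAt y (τ y (s.2 y)).onSource s.1) x

theorem rank_le_rank_runSeq (hx : x ∉ α) : (s.1 x).rank ≤ ((runSeq τ α s).1 x).rank := by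
  induction α generalizing s with
  | nil => rfl
  | cons y α ih =>
    obtain ⟨hxy, hxα⟩ := List.ne_and_not_mem_of_not_mem_cons hx
    exact (rank_le_rank_topple hxy).trans (ih hxα)

theorem StableIn.mem_of_two_le_rank {U : Set V} (hα : StableIn U (runSeq τ α s).1) (hxU : x ∈ U)
    (hx : 2 ≤ (s.1 x).rank) : x ∈ α := by
  by_contra hxα
  have h_unstable : 2 ≤ ((runSeq τ α s).1 x).rank := hx.trans (rank_le_rank_runSeq hxα)
  exact absurd (hα x hxU) (by lia)

theorem AcceptableSeq.cons_erase (hα : AcceptableSeq τ α s) (hxα : x ∈ α)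
    (hx : 1 ≤ (s.1 x).rank) : AcceptableSeq τ (x :: α.erase x) s := by
  induction α generalizing s with
  | nil => simp at hxα
  | cons y α ih =>
    obtain ⟨hy, hα⟩ := hα
    obtain rfl | hxy := eq_or_ne x y
    · simpa only [List.erase_cons_head] using ⟨hy, hα⟩
    · obtain ⟨-, h_tail⟩ := ih hα (List.mem_of_ne_of_mem hxy hxα)
        (hx.trans (rank_le_rank_topple hxy))
      rw [topple_comm hxy hx hy] at h_tail
      rw [List.erase_cons_tail (by simpa using hxy.symm)]
      exact ⟨hx, hy.trans (rank_le_rank_topple hxy.symm), h_tail⟩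

theorem AcceptableSeq.runSeq_cons_erase (hα : AcceptableSeq τ α s) (hxα : x ∈ α)
    (hx : 1 ≤ (s.1 x).rank) : runSeq τ (x :: α.erase x) s = runSeq τ α s := by
  induction α generalizing s with
  | nil => simp at hxα
  | cons y α ih =>
    obtain ⟨hy, hα⟩ := hα
    obtain rfl | hxy := eq_or_ne x y
    · rw [List.erase_cons_head]
    · rw [List.erase_cons_tail (by simpa using hxy.symm)]
      calc runSeq τ (α.erase x) (topple τ y (topple τ x s))
          = runSeq τ (x :: α.erase x) (topple τ y s) := by rw [runSeq, topple_comm hxy hx hy]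
        _ = runSeq τ α (topple τ y s) :=
          ih hα (List.mem_of_ne_of_mem hxy hxα) (hx.trans (rank_le_rank_topple hxy))

end Toppling

theorem stmt16_general (τ : V → ℕ → Instr V) (U : Set V) (s : (V → SiteState) × (V → ℕ))
    (α β : List V) (hβU : ∀ y ∈ β, y ∈ U) (hα : AcceptableSeq τ α s)
    (hαs : StableIn U (runSeq τ α s).1) (hβ : LegalSeq τ β s) (x : V) :
    β.count x ≤ α.count x := by
  suffices h_subperm : β.Subperm α from h_subperm.count_le x
  induction β generalizing α s with
  | nil => exact List.nil_subperm
  | cons z β ih =>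
    obtain ⟨hz, hβ⟩ := hβ
    obtain ⟨hzU, hβU⟩ := List.forall_mem_cons.1 hβU
    have hzα : z ∈ α := hαs.mem_of_two_le_rank hzU hz
    have hz_occupied : 1 ≤ (s.1 z).rank := one_le_two.trans hz
    rw [← hα.runSeq_cons_erase hzα hz_occupied] at hαs
    have h_erase : β.Subperm (α.erase z) :=
      ih (topple τ z s) (α.erase z) hβU (hα.cons_erase hzα hz_occupied).2 hαs hβ
    exact ((List.subperm_cons z).2 h_erase).trans (List.perm_cons_erase hzα).symm.subperm

/-- Comparison between acceptable and legal topplings: if `α` is an acceptable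
toppling sequence that stabilizes the configuration `η` in a finite set `U`, and
`β` is any legal toppling sequence for `η` contained in `U`, then `m_β ≤ m_α`
pointwise. -/
theorem stmt16 {V : Type*} [DecidableEq V] (τ : V → ℕ → Instr V) (U : Finset V)
    (η : V → SiteState) (α β : List V)
    (hαU : ∀ y ∈ α, y ∈ U) (hβU : ∀ y ∈ β, y ∈ U)
    (hα : AcceptableSeq τ α (η, fun _ => 0))
    (hαs : StableIn (↑U) (runSeq τ α (η, fun _ => 0)).1)
    (hβ : LegalSeq τ β (η, fun _ => 0)) :
    ∀ x : V, β.count x ≤ α.count x :=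
  stmt16_general τ U (η, fun _ => 0) α β hβU hα hαs hβ
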